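/- arXiv:1412.1499 — 2 statements merged into one kernel-verified Lean document; each statement's English description precedes it below -/
import Mathlib

section
/- Let E₂(q) = 1 − 24 Σ_{n=1}^∞ σ₁(n) qⁿ and F(q) = ∏_{n=1}^∞ (1 − qⁿ). Then for every complex number q with |q| < 1, one has 3 E₂(q²) − E₂(q) − 2 E₂(q⁴) = 24 q · F(q⁴)⁸ / F(q²)⁴. -/
open scoped BigOperators

/-- The weight-2 Eisenstein series `E₂(q) = 1 − 24 Σ_{n=1}^∞ σ₁(n) qⁿ`. -/
noncomputable def E2 (q : ℂ) : ℂ :=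
  1 - 24 * ∑' n : ℕ, (ArithmeticFunction.sigma 1 (n + 1) : ℂ) * q ^ (n + 1)

/-- The Euler product `F(q) = ∏_{n=1}^∞ (1 − qⁿ)`. -/
noncomputable def eulerF (q : ℂ) : ℂ := ∏' n : ℕ, (1 - q ^ (n + 1))

open Complex
open UpperHalfPlane hiding I

/-! ### Arithmetic of `σ₁` -/

lemma aux_sigma_two_mul_odd (m : ℕ) (hm : Odd m) :
    ArithmeticFunction.sigma 1 (2 * m) = 3 * ArithmeticFunction.sigma 1 m := by
  rw [ArithmeticFunction.isMultiplicative_sigma.map_mul_of_coprime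
    (Nat.coprime_two_left.mpr hm)]
  have : ArithmeticFunction.sigma 1 2 = 3 := by decide
  rw [this]

lemma aux_sigma_four_mul (m : ℕ) :
    ArithmeticFunction.sigma 1 (4 * m) + 2 * ArithmeticFunction.sigma 1 m
      = 3 * ArithmeticFunction.sigma 1 (2 * m) := by
  rcases Nat.eq_zero_or_pos m with rfl | hm
  · simp
  obtain ⟨k, n, hn, rfl⟩ := Nat.exists_eq_two_pow_mul_odd hm.ne'
  have hc (j : ℕ) : Nat.Coprime (2 ^ j) n :=
    Nat.Coprime.pow_left _ (Nat.coprime_two_left.mpr hn)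
  have e1 : 4 * (2 ^ k * n) = 2 ^ (k + 2) * n := by ring
  have e2 : 2 * (2 ^ k * n) = 2 ^ (k + 1) * n := by ring
  rw [e1, e2]
  simp only [ArithmeticFunction.isMultiplicative_sigma.map_mul_of_coprime (hc _)]
  simp only [ArithmeticFunction.sigma_one_apply_prime_pow Nat.prime_two]
  simp only [Finset.sum_range_succ]
  ring

/-! ### The series -/

lemma aux_summable_bound {r : ℝ} (h0 : 0 ≤ r) (hr : r < 1) :
    Summable (fun n : ℕ => (n : ℝ) ^ 2 * r ^ n) :=
  summable_pow_mul_geometric_of_norm_lt_one 2 (by rwa [Real.norm_of_nonneg h0])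

lemma aux_sigma_norm (n : ℕ) : ‖(ArithmeticFunction.sigma 1 n : ℂ)‖ ≤ (n : ℝ) ^ 2 := by
  rw [Complex.norm_natCast]
  exact_mod_cast ArithmeticFunction.sigma_le_pow_succ 1 n

lemma aux_summable_sigma {q : ℂ} (hq : ‖q‖ < 1) :
    Summable (fun n : ℕ => (ArithmeticFunction.sigma 1 n : ℂ) * q ^ n) := by
  refine Summable.of_norm_bounded (aux_summable_bound (norm_nonneg q) hq) fun n => ?_
  rw [norm_mul, norm_pow]
  gcongr
  exact aux_sigma_norm n

/-- `∑ σ(n) q^n`. -/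
noncomputable def auxS (q : ℂ) : ℂ := ∑' n : ℕ, (ArithmeticFunction.sigma 1 n : ℂ) * q ^ n

/-- `∑ σ(n+1) q^n`. -/
noncomputable def auxT (q : ℂ) : ℂ :=
  ∑' n : ℕ, (ArithmeticFunction.sigma 1 (n + 1) : ℂ) * q ^ n

lemma aux_E2_eq_S {q : ℂ} (hq : ‖q‖ < 1) : E2 q = 1 - 24 * auxS q := by
  rw [E2, auxS, (aux_summable_sigma hq).tsum_eq_zero_add]
  simp

lemma aux_E2_eq_T (q : ℂ) : E2 q = 1 - 24 * (q * auxT q) := by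
  have h : (∑' n : ℕ, (ArithmeticFunction.sigma 1 (n + 1) : ℂ) * q ^ (n + 1)) = q * auxT q := by
    rw [auxT, ← tsum_mul_left]
    apply tsum_congr
    intro n
    ring
  rw [E2, h]

lemma auxT_zero : auxT 0 = 1 := by
  rw [auxT, tsum_eq_single 0]
  · simp
  · intro n hn
    simp [hn]

lemma auxT_diff : DifferentiableOn ℂ auxT (Metric.ball 0 1) := by
  intro z hz
  have hz' : ‖z‖ < 1 := by simpa using hz
  obtain ⟨r, hr1, hr2⟩ := exists_between hz'
  have h0 : 0 < r := lt_of_le_of_lt (norm_nonneg z) hr1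
  have hsum : Summable (fun n : ℕ => ((n + 1 : ℕ) : ℝ) ^ 2 * r ^ n) := by
    have h := ((summable_nat_add_iff 1).mpr (aux_summable_bound h0.le hr2)).mul_left r⁻¹
    refine h.congr fun n => ?_
    rw [pow_succ r n]
    field_simp
  have h := Complex.differentiableOn_tsum_of_summable_norm
    (F := fun (n : ℕ) (q : ℂ) => (ArithmeticFunction.sigma 1 (n + 1) : ℂ) * q ^ n)
    (U := Metric.ball 0 r) hsum (fun i => by fun_prop) Metric.isOpen_ball
    (fun i w hw => by
      have hw' : ‖w‖ < r := by simpa using hw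
      rw [norm_mul, norm_pow]
      gcongr
      exact aux_sigma_norm _)
  exact ((h z (by simpa using hr1)).differentiableAt
    (Metric.isOpen_ball.mem_nhds (by simpa using hr1))).differentiableWithinAt

lemma aux_sq_lt {q : ℂ} (hq : ‖q‖ < 1) (n : ℕ) (hn : n ≠ 0) : ‖q ^ n‖ < 1 := by
  rw [norm_pow]
  exact pow_lt_one₀ (norm_nonneg _) hq hn

lemma auxS_hecke {q : ℂ} (hq : ‖q‖ < 1) :
    auxS q + auxS (-q) + 4 * auxS (q ^ 4) = 6 * auxS (q ^ 2) := by
  have i2 : Function.Injective (fun k : ℕ => 2 * k) := fun a b h => by simpa using h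
  have i2' : Function.Injective (fun k : ℕ => 2 * k + 1) := fun a b h => by simpa using h
  have split (x : ℂ) (hx : ‖x‖ < 1) :
      auxS x = (∑' k : ℕ, (ArithmeticFunction.sigma 1 (2 * k) : ℂ) * x ^ (2 * k))
        + ∑' k : ℕ, (ArithmeticFunction.sigma 1 (2 * k + 1) : ℂ) * x ^ (2 * k + 1) := by
    have h := aux_summable_sigma hx
    have h1 := h.comp_injective i2
    have h2 := h.comp_injective i2'
    simp only [Function.comp_def] at h1 h2
    exact (tsum_even_add_odd
      (f := fun n : ℕ => (ArithmeticFunction.sigma 1 n : ℂ) * x ^ n) h1 h2).symm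
  have hn : ‖-q‖ < 1 := by simpa using hq
  have h2 : ‖q ^ 2‖ < 1 := aux_sq_lt hq 2 (by norm_num)
  have h4 : ‖q ^ 4‖ < 1 := aux_sq_lt hq 4 (by norm_num)
  have s2 := aux_summable_sigma h2
  have sa := aux_summable_sigma hq
  have e1 : auxS q + auxS (-q)
      = 2 * ∑' k : ℕ, (ArithmeticFunction.sigma 1 (2 * k) : ℂ) * q ^ (2 * k) := by
    rw [split q hq, split (-q) hn]
    have : ∀ k : ℕ, (-q) ^ (2 * k + 1) = - q ^ (2 * k + 1) := fun k =>
      Odd.neg_pow ⟨k, rfl⟩ q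
    have h' : ∀ k : ℕ, (-q) ^ (2 * k) = q ^ (2 * k) := fun k =>
      Even.neg_pow ⟨k, by ring⟩ q
    simp only [this, h', mul_neg, tsum_neg]
    ring
  have sA := sa.comp_injective i2
  have e2 : (∑' k : ℕ, (ArithmeticFunction.sigma 1 (2 * k) : ℂ) * q ^ (2 * k))
      = 3 * auxS (q ^ 2) - 2 * auxS (q ^ 4) := by
    have h1 := sA.comp_injective i2
    have h2' := sA.comp_injective i2'
    simp only [Function.comp_def] at h1 h2'
    have h := tsum_even_add_odd
      (f := fun k : ℕ => (ArithmeticFunction.sigma 1 (2 * k) : ℂ) * q ^ (2 * k)) h1 h2'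
    rw [← h, split _ h2]
    have c1 : ∀ k : ℕ, (ArithmeticFunction.sigma 1 (2 * (2 * k)) : ℂ) * q ^ (2 * (2 * k))
        = 3 * ((ArithmeticFunction.sigma 1 (2 * k) : ℂ) * (q ^ 2) ^ (2 * k))
          - 2 * ((ArithmeticFunction.sigma 1 k : ℂ) * (q ^ 4) ^ k) := by
      intro k
      have := congrArg (Nat.cast : ℕ → ℂ) (aux_sigma_four_mul k)
      push_cast at this
      rw [← pow_mul, ← pow_mul, show 2 * (2 * k) = 4 * k by ring, eq_sub_of_add_eq this]
      ring
    have c2 : ∀ k : ℕ, (ArithmeticFunction.sigma 1 (2 * (2 * k + 1)) : ℂ) * q ^ (2 * (2 * k + 1))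
        = 3 * ((ArithmeticFunction.sigma 1 (2 * k + 1) : ℂ) * (q ^ 2) ^ (2 * k + 1)) := by
      intro k
      rw [aux_sigma_two_mul_odd _ ⟨k, rfl⟩, ← pow_mul]
      push_cast
      ring
    simp only [c1, c2]
    have s3 := (s2.comp_injective i2).mul_left 3
    simp only [Function.comp_def] at s3
    rw [Summable.tsum_sub s3 ((aux_summable_sigma h4).mul_left 2)]
    simp only [tsum_mul_left, auxS]
    ring
  rw [e1, e2]
  ring

lemma aux_E2_hecke {q : ℂ} (hq : ‖q‖ < 1) :
    E2 q + E2 (-q) + 4 * E2 (q ^ 4) = 6 * E2 (q ^ 2) := by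
  have hn : ‖-q‖ < 1 := by simpa using hq
  rw [aux_E2_eq_S hq, aux_E2_eq_S hn, aux_E2_eq_S (aux_sq_lt hq 2 (by norm_num)),
    aux_E2_eq_S (aux_sq_lt hq 4 (by norm_num))]
  linear_combination (-24) * auxS_hecke hq

/-! ### The product -/

lemma aux_multipliable {q : ℂ} (hq : ‖q‖ < 1) {i : ℕ → ℕ} (hi : Function.Injective i) :
    Multipliable (fun n : ℕ => 1 - q ^ (i n + 1)) := by
  have h : Summable fun n : ℕ => ‖-q ^ (n + 1)‖ := by
    simpa using (summable_nat_add_iff 1).mpr (summable_geometric_of_lt_one (norm_nonneg _) hq)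
  have := multipliable_one_add_of_summable (f := fun n => -q ^ (i n + 1)) (h.comp_injective hi)
  simpa [sub_eq_add_neg] using this

lemma aux_F_split {q : ℂ} (hq : ‖q‖ < 1) :
    eulerF q = (∏' k : ℕ, (1 - q ^ (2 * k + 1))) * eulerF (q ^ 2) := by
  have i2 : Function.Injective (fun k : ℕ => 2 * k) := fun a b h => by simpa using h
  have i2' : Function.Injective (fun k : ℕ => 2 * k + 1) := fun a b h => by simpa using h
  have h := tprod_even_mul_odd (f := fun n : ℕ => 1 - q ^ (n + 1))
    (aux_multipliable hq i2) (aux_multipliable hq i2')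
  rw [eulerF, ← h, eulerF]
  congr 1
  apply tprod_congr
  intro k
  rw [← pow_mul]
  congr 2

lemma aux_F_prod {q : ℂ} (hq : ‖q‖ < 1) :
    eulerF q * eulerF (-q) * eulerF (q ^ 4) = eulerF (q ^ 2) ^ 3 := by
  have hn : ‖-q‖ < 1 := by simpa using hq
  have h2 : ‖q ^ 2‖ < 1 := aux_sq_lt hq 2 (by norm_num)
  have i2 : Function.Injective (fun k : ℕ => 2 * k) := fun a b h => by simpa using h
  have key : (∏' k : ℕ, (1 - q ^ (2 * k + 1))) * (∏' k : ℕ, (1 - (-q) ^ (2 * k + 1)))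
      = ∏' k : ℕ, (1 - (q ^ 2) ^ (2 * k + 1)) := by
    rw [← (aux_multipliable hq i2).tprod_mul (aux_multipliable hn i2)]
    apply tprod_congr
    intro k
    rw [Odd.neg_pow ⟨k, rfl⟩ q]
    ring
  have h3 := aux_F_split h2
  rw [← pow_mul] at h3
  norm_num at h3
  rw [aux_F_split hq, aux_F_split hn, neg_sq]
  linear_combination eulerF (q ^ 2) ^ 2 * eulerF (q ^ 4) * key - eulerF (q ^ 2) ^ 2 * h3

lemma aux_F_ne {q : ℂ} (hq : ‖q‖ < 1) : eulerF q ≠ 0 := by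
  have h : Summable fun n : ℕ => ‖-q ^ (n + 1)‖ := by
    simpa using (summable_nat_add_iff 1).mpr (summable_geometric_of_lt_one (norm_nonneg _) hq)
  have := tprod_one_add_ne_zero_of_summable (f := fun n : ℕ => -q ^ (n + 1)) (fun i => by
    intro h0
    have h1 := aux_sq_lt hq (i + 1) (by omega)
    have : q ^ (i + 1) = 1 := by linear_combination -h0
    rw [this] at h1
    simp at h1) h
  simpa [eulerF, sub_eq_add_neg] using this

lemma aux_F_zero : eulerF 0 = 1 := by simp [eulerF]

lemma aux_F_diff : DifferentiableOn ℂ eulerF (Metric.ball 0 1) :=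
  ModularForm.differentiableOn_tprod_one_sub_pow

/-! ### Functions on the disc invariant under the theta-type action are constant -/

/-- The nome. -/
noncomputable def auxN (t : ℂ) : ℂ := cexp (Real.pi * I * t)

lemma auxN_norm (t : ℂ) : ‖auxN t‖ = Real.exp (-(Real.pi * t.im)) := by
  rw [auxN, Complex.norm_exp]
  simp

lemma auxN_lt (t : ℍ) : ‖auxN t‖ < 1 := by
  rw [auxN_norm, Real.exp_lt_one_iff]
  have : 0 < (t : ℂ).im := t.im_pos
  have := mul_pos Real.pi_pos this
  linarith

lemma auxN_surj {q : ℂ} (hq : ‖q‖ < 1) (h0 : q ≠ 0) : ∃ t : ℍ, auxN t = q := by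
  have hpi : (Real.pi : ℂ) ≠ 0 := by exact_mod_cast Real.pi_ne_zero
  have hx : auxN (Complex.log q / (Real.pi * I)) = q := by
    rw [auxN, mul_div_cancel₀ _ (mul_ne_zero hpi I_ne_zero), Complex.exp_log h0]
  refine ⟨⟨Complex.log q / (Real.pi * I), ?_⟩, hx⟩
  rw [← hx, auxN_norm, Real.exp_lt_one_iff] at hq
  by_contra h
  have := mul_nonneg Real.pi_pos.le (neg_nonneg.mpr (not_lt.mp h))
  linarith

lemma aux_const {R : ℂ → ℂ} (hd : DifferentiableOn ℂ R (Metric.ball 0 1))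
    (h0 : R 0 = 0)
    (hT : ∀ q : ℂ, ‖q‖ < 1 → R (-q) = R q)
    (hS : ∀ t : ℍ, R (auxN (-1 / t)) = R (auxN t)) {q : ℂ} (hq : ‖q‖ < 1) : R q = 0 := by
  have hT' : ∀ t : ℍ, R (auxN (1 + t)) = R (auxN t) := by
    intro t
    rw [← hT _ (auxN_lt t)]
    congr 1
    rw [auxN, auxN, mul_add, Complex.exp_add, mul_one, Complex.exp_pi_mul_I]
    ring
  have hSL : ∀ g : Matrix.SpecialLinearGroup (Fin 2) ℤ, ∀ t : ℍ,
      R (auxN ((g • t : ℍ) : ℂ)) = R (auxN t) := by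
    intro g
    have hg : g ∈ Subgroup.closure {ModularGroup.S, ModularGroup.T} := by
      simp [SpecialLinearGroup.SL2Z_generators]
    induction hg using Subgroup.closure_induction with
    | one => intro t; simp
    | mem g hg =>
      intro t
      rcases hg with rfl | rfl
      · rw [modular_S_smul, ← hS t]
        congr 2
        simp [neg_div, inv_neg]
      · rw [modular_T_smul, ← hT' t]
        simp
    | mul x y _ _ hx hy => intro t; rw [mul_smul, hx, hy]
    | inv x _ hx => intro t; rw [← hx (x⁻¹ • t), smul_inv_smul]
  have hc := Complex.eq_const_of_exists_le (r := Real.exp (-(Real.pi / 2))) hd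
    (Real.exp_pos _).le (by rw [Real.exp_lt_one_iff]; linarith [Real.pi_pos]) (fun z hz => by
      have hz' : ‖z‖ < 1 := by simpa using hz
      by_cases hz0 : z = 0
      · exact ⟨0, by simpa using (Real.exp_pos _).le, by rw [hz0]⟩
      · obtain ⟨t, rfl⟩ := auxN_surj hz' hz0
        obtain ⟨g, hg, -⟩ := ModularGroup.exists_one_half_le_im_smul_and_norm_denom_le t
        refine ⟨auxN ((g • t : ℍ) : ℂ), ?_, by rw [hSL]⟩
        rw [mem_closedBall_zero_iff, auxN_norm, Real.exp_le_exp]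
        have : (1 : ℝ) / 2 ≤ ((g • t : ℍ) : ℂ).im := hg
        nlinarith [Real.pi_pos])
  have := hc (show q ∈ Metric.ball 0 1 by simpa using hq)
  rw [this, Function.const, h0]

/-! ### Transformation formulas -/

lemma aux_E2_std (z : ℍ) : EisensteinSeries.E2 z = E2 (cexp (2 * Real.pi * I * z)) := by
  rw [EisensteinSeries.E2_eq_tsum_cexp, E2]
  rw [tsum_pnat_eq_tsum_succ (f := fun n =>
    (ArithmeticFunction.sigma 1 n : ℂ) * cexp (2 * Real.pi * I * z) ^ n)]

lemma aux_E2_S (z w : ℂ) (hz : 0 < z.im) (hw : w = -1 / z) :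
    E2 (cexp (2 * Real.pi * I * w)) = z ^ 2 * E2 (cexp (2 * Real.pi * I * z))
      + 6 * z / (Real.pi * I) := by
  have h := congrFun (EisensteinSeries.E2_slash_action ModularGroup.S) ⟨z, hz⟩
  rw [SlashInvariantForm.slash_S_apply] at h
  simp only [Pi.sub_apply, Pi.smul_apply, EisensteinSeries.D2_S, aux_E2_std, riemannZeta_two,
    smul_eq_mul] at h
  have hz0 : z ≠ 0 := by rintro rfl; simp at hz
  have hpi : (Real.pi : ℂ) ≠ 0 := by exact_mod_cast Real.pi_ne_zero
  have hw' : w = (-z)⁻¹ := by rw [hw]; simp [neg_div, inv_neg]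
  rw [hw']
  have h2 : (z : ℂ) ^ (-2 : ℤ) = (z ^ 2)⁻¹ := by
    rw [zpow_neg]; norm_cast
  rw [h2] at h
  field_simp at h ⊢
  linear_combination I * h - 6 * z * I_sq

lemma aux_eta_S (z w : ℂ) (hz : 0 < z.im) (hw : w = -1 / z) :
    ModularForm.eta w ^ 4 = - z ^ 2 * ModularForm.eta z ^ 4 := by
  have h := ModularForm.eta_comp_eq_csqrt_I_inv (show z ∈ upperHalfPlaneSet from hz)
  simp only [Function.comp_apply, Pi.smul_apply, Pi.mul_apply, smul_eq_mul] at h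
  have hz0 : z ≠ 0 := by rintro rfl; simp at hz
  have hs (x : ℂ) (hx : x ≠ 0) : Complex.sqrt x ^ 4 = x ^ 2 := by
    rw [sqrt_eq_exp hx, ← Complex.exp_nat_mul]
    rw [show ((4 : ℕ) : ℂ) * (Complex.log x / 2) = (2 : ℕ) * Complex.log x by push_cast; ring,
      Complex.exp_nat_mul, Complex.exp_log hx]
  rw [hw, h, mul_pow, mul_pow, inv_pow, hs I I_ne_zero, hs z hz0, I_sq]
  ring

lemma aux_eta_F (z : ℂ) : ModularForm.eta z
    = cexp (2 * Real.pi * I * z / 24) * eulerF (cexp (2 * Real.pi * I * z)) := by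
  simp only [ModularForm.eta, ModularForm.eta_q_eq_pow, eulerF, Function.Periodic.qParam]
  push_cast
  rfl

/-! ### The three ratios -/

noncomputable def auxR1 (q : ℂ) : ℂ :=
  (auxT q + auxT (-q)) / 2 * eulerF (q ^ 2) ^ 4 / eulerF (q ^ 4) ^ 8 - 1

noncomputable def auxR3 (q : ℂ) : ℂ :=
  (4 * E2 (q ^ 4) - E2 (-q)) * eulerF (q ^ 2) ^ 4 / (3 * eulerF q ^ 8) - 1

lemma aux_pow_maps (n : ℕ) (hn : n ≠ 0) :
    Set.MapsTo (fun q : ℂ => q ^ n) (Metric.ball 0 1) (Metric.ball 0 1) := by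
  intro q hq
  have := aux_sq_lt (q := q) (by simpa using hq) n hn
  simpa using this

lemma aux_neg_maps :
    Set.MapsTo (fun q : ℂ => -q) (Metric.ball 0 1) (Metric.ball 0 1) := by
  intro q hq
  simpa using hq

lemma aux_E2_diff : DifferentiableOn ℂ E2 (Metric.ball 0 1) := by
  have : E2 = fun q => 1 - 24 * (q * auxT q) := funext aux_E2_eq_T
  rw [this]
  exact (differentiableOn_const _).sub
    ((differentiableOn_const _).mul (differentiableOn_id.mul auxT_diff))

lemma aux_comp_pow {f : ℂ → ℂ} (hf : DifferentiableOn ℂ f (Metric.ball 0 1)) (n : ℕ)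
    (hn : n ≠ 0) : DifferentiableOn ℂ (fun q => f (q ^ n)) (Metric.ball 0 1) :=
  hf.comp (differentiableOn_pow n) (aux_pow_maps n hn)

lemma aux_comp_neg {f : ℂ → ℂ} (hf : DifferentiableOn ℂ f (Metric.ball 0 1)) :
    DifferentiableOn ℂ (fun q => f (-q)) (Metric.ball 0 1) :=
  hf.comp differentiableOn_id.neg aux_neg_maps

lemma auxR1_diff : DifferentiableOn ℂ auxR1 (Metric.ball 0 1) := by
  unfold auxR1
  refine DifferentiableOn.sub (DifferentiableOn.div (DifferentiableOn.mul ?_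
    ((aux_comp_pow aux_F_diff 2 (by norm_num)).pow 4))
    ((aux_comp_pow aux_F_diff 4 (by norm_num)).pow 8) ?_) (differentiableOn_const _)
  · exact (auxT_diff.add (aux_comp_neg auxT_diff)).div_const 2
  · intro q hq
    exact pow_ne_zero _ (aux_F_ne (aux_sq_lt (by simpa using hq) 4 (by norm_num)))

lemma auxR3_diff : DifferentiableOn ℂ auxR3 (Metric.ball 0 1) := by
  unfold auxR3
  refine DifferentiableOn.sub (DifferentiableOn.div (DifferentiableOn.mul ?_
    ((aux_comp_pow aux_F_diff 2 (by norm_num)).pow 4))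
    ((differentiableOn_const _).mul (aux_F_diff.pow 8)) ?_) (differentiableOn_const _)
  · exact ((differentiableOn_const _).mul (aux_comp_pow aux_E2_diff 4 (by norm_num))).sub
      (aux_comp_neg aux_E2_diff)
  · intro q hq
    exact mul_ne_zero (by norm_num) (pow_ne_zero _ (aux_F_ne (by simpa using hq)))

lemma auxR1_neg (q : ℂ) : auxR1 (-q) = auxR1 q := by
  simp only [auxR1, neg_neg, Even.neg_pow (show Even 2 by decide),
    Even.neg_pow (show Even 4 by decide), add_comm]

lemma auxR1_zero : auxR1 0 = 0 := by
  simp [auxR1, auxT_zero, aux_F_zero]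

lemma auxR3_zero : auxR3 0 = 0 := by
  have : E2 0 = 1 := by simp [aux_E2_eq_T]
  simp [auxR3, this, aux_F_zero]
  norm_num

lemma auxR1_eq {q : ℂ} (hq : ‖q‖ < 1) (h0 : q ≠ 0) :
    auxR1 q = (E2 (-q) - E2 q) * eulerF (q ^ 2) ^ 4 / (48 * q * eulerF (q ^ 4) ^ 8) - 1 := by
  have := aux_F_ne (aux_sq_lt hq 4 (by norm_num))
  rw [auxR1, aux_E2_eq_T, aux_E2_eq_T]
  field_simp
  ring

lemma auxR2_eq {q : ℂ} (hq : ‖q‖ < 1) :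
    auxR3 (-q) = (4 * E2 (q ^ 4) - E2 q) * (eulerF q ^ 8 * eulerF (q ^ 4) ^ 8)
      / (3 * eulerF (q ^ 2) ^ 20) - 1 := by
  have hn : ‖-q‖ < 1 := by simpa using hq
  have h4 := aux_F_ne (aux_sq_lt hq 4 (by norm_num))
  have h2 := aux_F_ne (aux_sq_lt hq 2 (by norm_num))
  have h1 := aux_F_ne hq
  have hm := aux_F_ne hn
  have h := aux_F_prod hq
  have h' : eulerF (q ^ 2) ^ 24 = eulerF q ^ 8 * eulerF (q ^ 4) ^ 8 * eulerF (-q) ^ 8 := by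
    rw [← mul_pow, ← mul_pow, show 24 = 3 * 8 by norm_num, pow_mul, ← h]
    ring
  rw [auxR3, neg_neg, Even.neg_pow (show Even 2 by decide), Even.neg_pow (show Even 4 by decide)]
  congr 1
  rw [div_eq_div_iff (by simp [hm]) (by simp [h2])]
  linear_combination 3 * (4 * E2 (q ^ 4) - E2 q) * h'

/-- All the facts about the `S`-action. -/
lemma aux_S_action (t : ℍ) :
    auxR1 (auxN (-1 / t)) = auxR3 (auxN t) ∧ auxR3 (auxN (-1 / t)) = auxR1 (auxN t) ∧
    auxR3 (-auxN (-1 / t)) = auxR3 (-auxN t) := by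
  have ht0 : (t : ℂ) ≠ 0 := t.ne_zero
  have htim : 0 < (t : ℂ).im := t.im_pos
  have hpi : (Real.pi : ℂ) ≠ 0 := by exact_mod_cast Real.pi_ne_zero
  obtain ⟨s, hs⟩ : ∃ s : ℍ, (s : ℂ) = -1 / t :=
    ⟨.mk _ t.im_inv_neg_coe_pos, by simp [neg_div, inv_neg]⟩
  rw [← hs]
  have hq := auxN_lt t
  have hq' := auxN_lt s
  have hq0 : auxN t ≠ 0 := Complex.exp_ne_zero _
  have hq0' : auxN s ≠ 0 := Complex.exp_ne_zero _
  -- arguments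
  have n1 (x : ℂ) : cexp (2 * Real.pi * I * (x / 2)) = auxN x := by
    rw [auxN]; congr 1; ring
  have n2 (x : ℂ) : cexp (2 * Real.pi * I * x) = auxN x ^ 2 := by
    rw [auxN, ← Complex.exp_nat_mul]; congr 1; push_cast; ring
  have n4 (x : ℂ) : cexp (2 * Real.pi * I * (2 * x)) = auxN x ^ 4 := by
    rw [auxN, ← Complex.exp_nat_mul]; congr 1; push_cast; ring
  have im2 : 0 < (2 * (t : ℂ)).im := by simpa using htim
  have imh : 0 < ((t : ℂ) / 2).im := by simpa using htim
  have w2 : (s : ℂ) / 2 = -1 / (2 * t) := by rw [hs]; field_simp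
  have wh : 2 * (s : ℂ) = -1 / (t / 2) := by rw [hs]; field_simp
  -- Eisenstein
  have a' := aux_E2_S _ _ im2 w2
  have c' := aux_E2_S _ _ imh wh
  have e' := aux_E2_S _ _ htim hs
  rw [n1, n4] at a' c'
  rw [n2, n2] at e'
  have hk := aux_E2_hecke hq
  have hk' := aux_E2_hecke hq'
  have b' : E2 (-auxN s) = t ^ 2 * E2 (-auxN t) + 12 * t / (Real.pi * I) := by
    linear_combination hk' - a' - 4 * c' + 6 * e' - t ^ 2 * hk
  -- eta
  have y2 := aux_eta_S _ _ im2 w2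
  have yh := aux_eta_S _ _ imh wh
  have y1 := aux_eta_S _ _ htim hs
  have g (x : ℂ) : ∃ u : ℂ, u ≠ 0 ∧ u ^ 24 = auxN x ∧
      ModularForm.eta (x / 2) = u * eulerF (auxN x) ∧
      ModularForm.eta x = u ^ 2 * eulerF (auxN x ^ 2) ∧
      ModularForm.eta (2 * x) = u ^ 4 * eulerF (auxN x ^ 4) := by
    refine ⟨cexp (Real.pi * I * x / 24), Complex.exp_ne_zero _, ?_, ?_, ?_, ?_⟩
    · rw [auxN, ← Complex.exp_nat_mul]; congr 1; push_cast; ring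
    · rw [aux_eta_F, n1]; congr 2; ring
    · rw [aux_eta_F, n2, ← Complex.exp_nat_mul]; congr 2; push_cast; ring
    · rw [aux_eta_F, n4, ← Complex.exp_nat_mul]; congr 2; push_cast; ring
  -- ratios through eta
  have r1 (x : ℍ) : auxR1 (auxN x) = (E2 (-auxN x) - E2 (auxN x)) * ModularForm.eta x ^ 4
      / (48 * ModularForm.eta (2 * x) ^ 8) - 1 := by
    obtain ⟨u, hu, h24, k1, k2, k4⟩ := g x
    have f4 := aux_F_ne (aux_sq_lt (auxN_lt x) 4 (by norm_num))
    have hx0 : auxN x ≠ 0 := Complex.exp_ne_zero _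
    rw [auxR1_eq (auxN_lt x) hx0, k2, k4]
    congr 1
    rw [div_eq_div_iff (by simp [hu, f4, hx0]) (by simp [hu, f4, hx0])]
    have h24' := h24.symm
    linear_combination (-48) * (E2 (-auxN x) - E2 (auxN x)) * eulerF (auxN x ^ 2) ^ 4
      * u ^ 8 * eulerF (auxN x ^ 4) ^ 8 * h24'
  have r3 (x : ℍ) : auxR3 (auxN x) = (4 * E2 (auxN x ^ 4) - E2 (-auxN x)) * ModularForm.eta x ^ 4
      / (3 * ModularForm.eta (x / 2) ^ 8) - 1 := by
    obtain ⟨u, hu, h24, k1, k2, k4⟩ := g x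
    have f1 := aux_F_ne (auxN_lt x)
    rw [auxR3, k2, k1]
    congr 1
    rw [div_eq_div_iff (by simp [hu, f1]) (by simp [hu, f1])]
    ring
  have r2 (x : ℍ) : auxR3 (-auxN x) = (4 * E2 (auxN x ^ 4) - E2 (auxN x))
      * (ModularForm.eta (x / 2) ^ 8 * ModularForm.eta (2 * x) ^ 8)
      / (3 * ModularForm.eta x ^ 20) - 1 := by
    obtain ⟨u, hu, h24, k1, k2, k4⟩ := g x
    have f2 := aux_F_ne (aux_sq_lt (auxN_lt x) 2 (by norm_num))
    rw [auxR2_eq (auxN_lt x), k1, k2, k4]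
    congr 1
    rw [div_eq_div_iff (by simp [hu, f2]) (by simp [hu, f2])]
    ring
  have z1 : ModularForm.eta (t : ℂ) ≠ 0 := ModularForm.eta_ne_zero htim
  have z2 : ModularForm.eta (2 * (t : ℂ)) ≠ 0 := ModularForm.eta_ne_zero im2
  have zh : ModularForm.eta ((t : ℂ) / 2) ≠ 0 := ModularForm.eta_ne_zero imh
  have y2' : ModularForm.eta ((s : ℂ) / 2) ^ 8
      = 16 * t ^ 4 * ModularForm.eta (2 * t) ^ 8 := by
    rw [show 8 = 4 * 2 by norm_num, pow_mul, y2]; ring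
  have yh' : ModularForm.eta (2 * (s : ℂ)) ^ 8
      = t ^ 4 / 16 * ModularForm.eta (t / 2) ^ 8 := by
    rw [show 8 = 4 * 2 by norm_num, pow_mul, yh]; ring
  have y1' : ModularForm.eta (s : ℂ) ^ 20
      = - t ^ 10 * ModularForm.eta t ^ 20 := by
    rw [show 20 = 4 * 5 by norm_num, pow_mul, y1]; ring
  refine ⟨?_, ?_, ?_⟩
  · rw [r1, r3, y1, yh', a', b']
    congr 1
    rw [div_eq_div_iff (by simp [ht0, z1, z2, zh]) (by simp [ht0, z1, z2, zh])]
    field_simp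
    ring
  · rw [r3, r1, y1, y2', b', c']
    congr 1
    rw [div_eq_div_iff (by simp [ht0, z1, z2, zh]) (by simp [ht0, z1, z2, zh])]
    field_simp
    ring
  · rw [r2, r2, y1', y2', yh', a', c']
    congr 1
    rw [div_eq_div_iff (by simp [ht0, z1]) (by simp [z1])]
    field_simp
    ring

lemma auxR1_eq_zero {q : ℂ} (hq : ‖q‖ < 1) : auxR1 q = 0 := by
  have d1 := auxR1_diff
  have d3 := auxR3_diff
  have d2 := aux_comp_neg auxR3_diff
  have E1 : auxR1 q + auxR3 q + auxR3 (-q) = 0 :=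
    aux_const (R := fun q => auxR1 q + auxR3 q + auxR3 (-q)) ((d1.add d3).add d2)
      (by simp [auxR1_zero, auxR3_zero])
      (fun q _ => by simp only [auxR1_neg, neg_neg]; ring)
      (fun t => by
        obtain ⟨h1, h2, h3⟩ := aux_S_action t
        simp only [h1, h2, h3]; ring) hq
  have E2 : auxR1 q * auxR3 q + auxR3 q * auxR3 (-q) + auxR1 q * auxR3 (-q) = 0 :=
    aux_const (R := fun q => auxR1 q * auxR3 q + auxR3 q * auxR3 (-q) + auxR1 q * auxR3 (-q))
      (((d1.mul d3).add (d3.mul d2)).add (d1.mul d2))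
      (by simp [auxR1_zero, auxR3_zero])
      (fun q _ => by simp only [auxR1_neg, neg_neg]; ring)
      (fun t => by
        obtain ⟨h1, h2, h3⟩ := aux_S_action t
        simp only [h1, h2, h3]; ring) hq
  have E3 : auxR1 q * auxR3 q * auxR3 (-q) = 0 :=
    aux_const (R := fun q => auxR1 q * auxR3 q * auxR3 (-q))
      ((d1.mul d3).mul d2)
      (by simp [auxR1_zero, auxR3_zero])
      (fun q _ => by simp only [auxR1_neg, neg_neg]; ring)
      (fun t => by
        obtain ⟨h1, h2, h3⟩ := aux_S_action t
        simp only [h1, h2, h3]; ring) hq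
  have : auxR1 q ^ 3 = 0 := by
    linear_combination auxR1 q ^ 2 * E1 - auxR1 q * E2 + E3
  exact pow_eq_zero_iff (by norm_num) |>.mp this

/-- `3E₂(q²) − E₂(q) − 2E₂(q⁴) = 24 q F(q⁴)⁸/F(q²)⁴`, i.e. `= 24 η(q⁴)⁸/η(q²)⁴`. -/
theorem eisenstein_eta_identity (q : ℂ) (hq : ‖q‖ < 1) :
    3 * E2 (q ^ 2) - E2 q - 2 * E2 (q ^ 4)
      = 24 * q * eulerF (q ^ 4) ^ 8 / eulerF (q ^ 2) ^ 4 := by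
  have h4 := aux_F_ne (aux_sq_lt hq 4 (by norm_num))
  have h2 := aux_F_ne (aux_sq_lt hq 2 (by norm_num))
  have h := auxR1_eq_zero hq
  have hk := aux_E2_hecke hq
  have e : 3 * E2 (q ^ 2) - E2 q - 2 * E2 (q ^ 4) = (E2 (-q) - E2 q) / 2 := by
    linear_combination -hk / 2
  rw [e, aux_E2_eq_T, aux_E2_eq_T]
  rw [auxR1, sub_eq_zero, div_eq_one_iff_eq (pow_ne_zero _ h4)] at h
  rw [eq_div_iff (pow_ne_zero _ h2), ← h]
  ring
end

section
/- Let E₂(q) = 1 − 24 Σ_{n=1}^∞ σ₁(n) qⁿ and F(q) = ∏_{n=1}^∞ (1 − qⁿ). Then for every complex number q with |q| < 1, one has ( 2 E₂(q²) − E₂(q) )² · F(q)⁸ · F(q²)⁸ = F(q)^{24} + 64 q · F(q²)^{24}. (Equivalently, with η(q) = q^{1/24}F(q), the square of the weight-2 modular form A₂²(q) = 2E₂(q²) − E₂(q) for Γ₀(2) satisfies A₂⁸ η(q)⁸η(q²)⁸ = η(q)^{24} + 2⁶ η(q²)^{24}, i.e. A₂² equals the eta-quotient (2⁶η(q²)^{24}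 + η(q)^{24})^{1/2} / (η(q)²η(q²)²).) -/
open scoped BigOperators

namespace A2Proof

open Complex Filter Topology ModularForm

local notation "𝕢" => Function.Periodic.qParam

lemma eulerF_differentiableOn : DifferentiableOn ℂ eulerF (Metric.ball (0 : ℂ) 1) :=
  differentiableOn_tprod_one_sub_pow

lemma eulerF_zero : eulerF 0 = 1 := by simp [eulerF]

lemma E2_zero : E2 0 = 1 := by simp [E2]

lemma eulerF_ne_zero {q : ℂ} (hq : ‖q‖ < 1) : eulerF q ≠ 0 := by
  rcases eq_or_ne q 0 with rfl | h0
  · simp [eulerF_zero]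
  · have him := Function.Periodic.im_invQParam_pos_of_norm_lt_one one_pos hq h0
    have := eta_tprod_ne_zero (z := Function.Periodic.invQParam 1 q) him
    simpa [eulerF, eta_q, Function.Periodic.qParam_right_inv one_ne_zero h0] using this

lemma E2_differentiableOn : DifferentiableOn ℂ E2 (Metric.ball (0 : ℂ) 1) := by
  intro q hq
  obtain ⟨r, hr1, hr2⟩ := exists_between (mem_ball_zero_iff.mp hq)
  have hr0 : 0 ≤ r := (norm_nonneg _).trans hr1.le
  have hS : Summable fun n : ℕ ↦ ((n + 1 : ℕ) : ℝ) ^ 2 * r ^ (n + 1) := by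
    have := summable_pow_mul_geometric_of_norm_lt_one 2 (r := r) (by rwa [Real.norm_of_nonneg hr0])
    exact (summable_nat_add_iff 1).mpr this
  have key : DifferentiableOn ℂ
      (fun q : ℂ ↦ ∑' n : ℕ, (ArithmeticFunction.sigma 1 (n + 1) : ℂ) * q ^ (n + 1))
      (Metric.ball (0 : ℂ) r) := by
    refine differentiableOn_tsum_of_summable_norm hS (fun n ↦ by fun_prop) Metric.isOpen_ball ?_
    intro n w hw
    rw [norm_mul, norm_pow, Complex.norm_natCast]
    gcongr
    · have := ArithmeticFunction.sigma_le_pow_succ 1 (n + 1)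
      exact_mod_cast this
    · exact (mem_ball_zero_iff.mp hw).le
  have h2 : DifferentiableAt ℂ E2 q := by
    unfold E2
    have := key.differentiableAt (Metric.isOpen_ball.mem_nhds (mem_ball_zero_iff.mpr hr1))
    fun_prop
  exact h2.differentiableWithinAt

/-- The function `2 E₂(q²) - E₂(q)`. -/
noncomputable def AA (q : ℂ) : ℂ := 2 * E2 (q ^ 2) - E2 q
/-- `η(τ)^16 / η(2τ)^8` in terms of `q`. -/
noncomputable def UU (q : ℂ) : ℂ := eulerF q ^ 16 / eulerF (q ^ 2) ^ 8
/-- `η(2τ)^16 / η(τ)^8` divided by `q`. -/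
noncomputable def VV (q : ℂ) : ℂ := eulerF (q ^ 2) ^ 16 / eulerF q ^ 8
/-- The difference to be shown to vanish. -/
noncomputable def GG (q : ℂ) : ℂ := AA q ^ 2 - UU q - 64 * (q * VV q)

lemma sq_lt {q : ℂ} (hq : ‖q‖ < 1) : ‖q ^ 2‖ < 1 := by
  rw [norm_pow]; exact pow_lt_one₀ (norm_nonneg _) hq two_ne_zero

lemma F_diff {q : ℂ} (hq : ‖q‖ < 1) : DifferentiableAt ℂ eulerF q :=
  eulerF_differentiableOn.differentiableAt (Metric.isOpen_ball.mem_nhds (mem_ball_zero_iff.mpr hq))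

lemma E2_diff {q : ℂ} (hq : ‖q‖ < 1) : DifferentiableAt ℂ E2 q :=
  E2_differentiableOn.differentiableAt (Metric.isOpen_ball.mem_nhds (mem_ball_zero_iff.mpr hq))

lemma F2_diff {q : ℂ} (hq : ‖q‖ < 1) : DifferentiableAt ℂ (fun q ↦ eulerF (q ^ 2)) q :=
  (F_diff (sq_lt hq)).comp q (f := fun q ↦ q ^ 2) (by fun_prop)

lemma E22_diff {q : ℂ} (hq : ‖q‖ < 1) : DifferentiableAt ℂ (fun q ↦ E2 (q ^ 2)) q :=
  (E2_diff (sq_lt hq)).comp q (f := fun q ↦ q ^ 2) (by fun_prop)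

lemma UU_diff {q : ℂ} (hq : ‖q‖ < 1) : DifferentiableAt ℂ UU q :=
  ((F_diff hq).pow 16).div ((F2_diff hq).pow 8) (pow_ne_zero _ (eulerF_ne_zero (sq_lt hq)))

lemma VV_diff {q : ℂ} (hq : ‖q‖ < 1) : DifferentiableAt ℂ VV q :=
  ((F2_diff hq).pow 16).div ((F_diff hq).pow 8) (pow_ne_zero _ (eulerF_ne_zero hq))

lemma GG_diff {q : ℂ} (hq : ‖q‖ < 1) : DifferentiableAt ℂ GG q := by
  have h1 := UU_diff hq
  have h2 := VV_diff hq
  have h3 := E2_diff hq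
  have h4 := E22_diff hq
  unfold GG AA
  fun_prop

lemma UU_ne {q : ℂ} (hq : ‖q‖ < 1) : UU q ≠ 0 :=
  div_ne_zero (pow_ne_zero _ (eulerF_ne_zero hq)) (pow_ne_zero _ (eulerF_ne_zero (sq_lt hq)))

lemma VV_ne {q : ℂ} (hq : ‖q‖ < 1) : VV q ≠ 0 :=
  div_ne_zero (pow_ne_zero _ (eulerF_ne_zero (sq_lt hq))) (pow_ne_zero _ (eulerF_ne_zero hq))

lemma UU_zero : UU 0 = 1 := by simp [UU, eulerF_zero]
lemma VV_zero : VV 0 = 1 := by simp [VV, eulerF_zero]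
lemma GG_zero : GG 0 = 0 := by simp [GG, UU_zero, AA, E2_zero]; norm_num

/-- `g / v` in terms of `q`. -/
noncomputable def HH (q : ℂ) : ℂ := GG q / (q * VV q)
/-- `g / u` in terms of `q`. -/
noncomputable def KK (q : ℂ) : ℂ := GG q / UU q

lemma HH_diff {q : ℂ} (hq : ‖q‖ < 1) (h0 : q ≠ 0) : DifferentiableAt ℂ HH q :=
  (GG_diff hq).div (differentiableAt_id.mul (VV_diff hq)) (mul_ne_zero h0 (VV_ne hq))

lemma KK_diff {q : ℂ} (hq : ‖q‖ < 1) : DifferentiableAt ℂ KK q :=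
  (GG_diff hq).div (UU_diff hq) (UU_ne hq)

lemma KK_tendsto : Tendsto KK (𝓝 0) (𝓝 0) := by
  have h := (KK_diff (q := 0) (by simp)).continuousAt.tendsto
  simpa [KK, GG_zero] using h

lemma HH_tendsto : ∃ c, Tendsto HH (𝓝[≠] 0) (𝓝 c) := by
  have hd := (GG_diff (q := 0) (by simp)).hasDerivAt
  rw [hasDerivAt_iff_tendsto_slope] at hd
  have hV : Tendsto VV (𝓝[≠] 0) (𝓝 1) := by
    have h := (VV_diff (q := 0) (by simp)).continuousAt.tendsto
    rw [VV_zero] at h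
    exact h.mono_left nhdsWithin_le_nhds
  refine ⟨_, (hd.div hV one_ne_zero).congr fun q ↦ ?_⟩
  simp [HH, slope_def_field, GG_zero, div_div]

/-! ### Modular side -/

lemma E2_eq (z : UpperHalfPlane) : E2 (𝕢 1 z) = EisensteinSeries.E2 z := by
  rw [EisensteinSeries.E2_eq_tsum_cexp, E2, tsum_pnat_eq_tsum_succ
    (f := fun n ↦ (ArithmeticFunction.sigma 1 n : ℂ) * cexp (2 * Real.pi * I * z) ^ n)]
  simp [Function.Periodic.qParam]

lemma eta_eq (z : ℂ) : η z = 𝕢 24 z * eulerF (𝕢 1 z) := rfl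

lemma q24 (z : ℂ) : 𝕢 24 z ^ 24 = 𝕢 1 z := by
  simp [Function.Periodic.qParam, ← Complex.exp_nat_mul]
  ring_nf

lemma q24_two (z : ℂ) : 𝕢 24 (2 * z) = 𝕢 24 z ^ 2 := by
  simp [Function.Periodic.qParam, ← Complex.exp_nat_mul]
  ring_nf

lemma q1_two (z : ℂ) : 𝕢 1 (2 * z) = 𝕢 1 z ^ 2 := by
  simp [Function.Periodic.qParam, ← Complex.exp_nat_mul]
  ring_nf

lemma q1_add (z : ℂ) : 𝕢 1 (z + 1) = 𝕢 1 z := by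
  simp [Function.Periodic.qParam, mul_add, Complex.exp_add]

lemma q_lt {z : ℂ} (hz : 0 < z.im) : ‖𝕢 1 z‖ < 1 :=
  Function.Periodic.norm_qParam_lt_one one_pos hz

lemma two_im {z : ℂ} (hz : 0 < z.im) : 0 < (2 * z).im := by simpa using hz

lemma inv_im {z : ℂ} (hz : 0 < z.im) : 0 < (-1 / z).im := by
  have := UpperHalfPlane.im_inv_neg_coe_pos ⟨z, hz⟩
  simpa [neg_div, inv_neg] using this

lemma UU_eta {z : ℂ} (hz : 0 < z.im) : UU (𝕢 1 z) = η z ^ 16 / η (2 * z) ^ 8 := by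
  have h1 := eulerF_ne_zero (sq_lt (q_lt hz))
  have h2 : 𝕢 24 z ≠ 0 := Function.Periodic.qParam_ne_zero z
  rw [UU, eta_eq, eta_eq, q24_two, q1_two]
  field_simp

lemma VV_eta {z : ℂ} (hz : 0 < z.im) : 𝕢 1 z * VV (𝕢 1 z) = η (2 * z) ^ 16 / η z ^ 8 := by
  have h1 := eulerF_ne_zero (q_lt hz)
  have h2 : 𝕢 24 z ≠ 0 := Function.Periodic.qParam_ne_zero z
  rw [VV, eta_eq, eta_eq, q24_two, q1_two]
  nth_rewrite 1 [← q24 z]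
  field_simp

lemma sqrt8 {z : ℂ} (hz : z ≠ 0) : sqrt z ^ 8 = z ^ 4 := by
  rw [sqrt_eq_exp hz, ← exp_nat_mul]
  ring_nf
  rw [show (log z * 4) = (4 : ℕ) * log z by push_cast; ring, exp_nat_mul, exp_log hz]

lemma eta8 {z : ℂ} (hz : 0 < z.im) : η (-1 / z) ^ 8 = z ^ 4 * η z ^ 8 := by
  have h := eta_comp_eq_csqrt_I_inv (x := z) hz
  have hz0 : z ≠ 0 := by rintro rfl; simp at hz
  simp only [Function.comp, Pi.smul_apply, Pi.mul_apply, smul_eq_mul] at h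
  rw [h, mul_pow, mul_pow, inv_pow, sqrt8 I_ne_zero, sqrt8 hz0]
  simp

lemma E2_S_aux (z : UpperHalfPlane) :
    E2 (𝕢 1 (-1 / (z : ℂ))) = (z : ℂ) ^ 2 * E2 (𝕢 1 z) + 6 * z / (Real.pi * I) := by
  have hE2 := congrFun (EisensteinSeries.E2_slash_action ModularGroup.S) z
  have hz0 : (z : ℂ) ≠ 0 := z.ne_zero
  simp only [one_div, SL_slash_def, UpperHalfPlane.modular_S_smul, ModularGroup.denom_S,
    Int.reduceNeg, zpow_neg, riemannZeta_two, mul_inv_rev, inv_div, Pi.sub_apply, Pi.smul_apply,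
    EisensteinSeries.D2_S, smul_eq_mul] at hE2
  have h1 := E2_eq z
  have h2 := E2_eq ⟨-1 / (z : ℂ), inv_im z.2⟩
  have h3 : (UpperHalfPlane.mk (-(z : ℂ))⁻¹ z.im_inv_neg_coe_pos)
      = ⟨-1 / (z : ℂ), inv_im z.2⟩ := by
    ext; simp [neg_div, inv_neg]
  simp only [h3, ← h1, ← h2] at hE2
  have hpi : (Real.pi : ℂ) ≠ 0 := by exact_mod_cast Real.pi_ne_zero
  have h4 : (z : ℂ) ^ (2 : ℤ) = (z : ℂ) ^ 2 := by norm_cast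
  rw [h4] at hE2
  have h5 : 6 * (z : ℂ) / (Real.pi * I) = - 6 * z * I / Real.pi := by
    field_simp
    simp [I_sq]
  rw [h5]
  field_simp at hE2 ⊢
  linear_combination hE2

lemma E2_S {z : ℂ} (hz : 0 < z.im) :
    E2 (𝕢 1 (-1 / z)) = z ^ 2 * E2 (𝕢 1 z) + 6 * z / (Real.pi * I) :=
  E2_S_aux ⟨z, hz⟩

lemma ne_zero_of_im {z : ℂ} (hz : 0 < z.im) : z ≠ 0 := by rintro rfl; simp at hz

/-- The Fricke involution. -/
noncomputable def WW (z : ℂ) : ℂ := -1 / (2 * z)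

lemma WW_im {z : ℂ} (hz : 0 < z.im) : 0 < (WW z).im := inv_im (two_im hz)

lemma two_WW (z : ℂ) : 2 * WW z = -1 / z := by
  unfold WW
  rcases eq_or_ne z 0 with rfl | h
  · simp
  · field_simp

lemma AA_W {z : ℂ} (hz : 0 < z.im) : AA (𝕢 1 (WW z)) = -2 * z ^ 2 * AA (𝕢 1 z) := by
  have h1 := E2_S hz
  have h2 := E2_S (two_im hz)
  rw [AA, AA, ← q1_two, ← q1_two, two_WW, WW, h1, h2]
  ring

lemma UU_W {z : ℂ} (hz : 0 < z.im) :
    UU (𝕢 1 (WW z)) = 256 * z ^ 4 * (𝕢 1 z * VV (𝕢 1 z)) := by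
  have hz0 := ne_zero_of_im hz
  have h1 := eta8 hz
  have h2 := eta8 (two_im hz)
  have n1 : η z ≠ 0 := eta_ne_zero hz
  rw [UU_eta (WW_im hz), VV_eta hz, two_WW, WW, show 16 = 8 * 2 from rfl, pow_mul, h2, h1]
  field_simp
  ring

lemma VV_W {z : ℂ} (hz : 0 < z.im) :
    𝕢 1 (WW z) * VV (𝕢 1 (WW z)) = z ^ 4 / 16 * UU (𝕢 1 z) := by
  have hz0 := ne_zero_of_im hz
  have h1 := eta8 hz
  have h2 := eta8 (two_im hz)
  have n1 : η (2 * z) ≠ 0 := eta_ne_zero (two_im hz)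
  rw [VV_eta (WW_im hz), UU_eta hz, two_WW, WW, show 16 = 8 * 2 from rfl, pow_mul, h2, h1]
  field_simp
  ring

lemma GG_W {z : ℂ} (hz : 0 < z.im) : GG (𝕢 1 (WW z)) = 4 * z ^ 4 * GG (𝕢 1 z) := by
  rw [GG, GG, AA_W hz, UU_W hz, VV_W hz]
  ring

lemma HH_W {z : ℂ} (hz : 0 < z.im) : HH (𝕢 1 (WW z)) = 64 * KK (𝕢 1 z) := by
  have hz0 := ne_zero_of_im hz
  have := UU_ne (q_lt hz)
  rw [HH, KK, GG_W hz, VV_W hz]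
  field_simp
  ring

lemma KK_W {z : ℂ} (hz : 0 < z.im) : KK (𝕢 1 (WW z)) = HH (𝕢 1 z) / 64 := by
  have hz0 := ne_zero_of_im hz
  have := VV_ne (q_lt hz)
  have h2 : 𝕢 1 z ≠ 0 := Function.Periodic.qParam_ne_zero z
  rw [HH, KK, GG_W hz, UU_W hz]
  field_simp
  ring

/-- The level one norm of `g / v`. -/
noncomputable def NN (z : ℂ) : ℂ := HH (𝕢 1 z) * (KK (𝕢 1 (z / 2)) * KK (𝕢 1 ((z + 1) / 2)))

lemma half_im {z : ℂ} (hz : 0 < z.im) : 0 < (z / 2).im := by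
  have : (z / 2).im = z.im / 2 := by simp
  rw [this]; positivity

lemma add_im {z : ℂ} (hz : 0 < z.im) : 0 < (z + 1).im := by simpa using hz

lemma NN_T (z : ℂ) : NN (z + 1) = NN z := by
  have : (z + 1 + 1) / 2 = z / 2 + 1 := by ring
  rw [NN, NN, q1_add, this, q1_add]
  ring

lemma KK_gamma {z : ℂ} (hz : 0 < z.im) : KK (𝕢 1 (WW (WW z + 1) + 1)) = KK (𝕢 1 z) := by
  rw [q1_add, KK_W (add_im (WW_im hz)), q1_add, HH_W hz]
  ring

lemma NN_S {z : ℂ} (hz : 0 < z.im) : NN (-1 / z) = NN z := by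
  have hz0 := ne_zero_of_im hz
  have h1 : -1 / z = WW (z / 2) := by unfold WW; field_simp
  have h2 : -1 / z / 2 = WW z := by unfold WW; field_simp
  have h3 : (-1 / z + 1) / 2 = WW (WW ((z + 1) / 2) + 1) + 1 := by
    have hz1 := ne_zero_of_im (add_im hz)
    have e : WW ((z + 1) / 2) + 1 = z / (z + 1) := by
      unfold WW; field_simp; ring
    rw [e]
    unfold WW
    field_simp
    ring
  rw [NN, NN, h2, h3, KK_gamma (half_im (add_im hz)), KK_W hz, h1, HH_W (half_im hz)]
  ring

lemma H_diff {z : ℂ} (hz : 0 < z.im) : DifferentiableAt ℂ (fun z ↦ HH (𝕢 1 z)) z :=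
  (HH_diff (q_lt hz) (Function.Periodic.qParam_ne_zero z)).comp z (f := 𝕢 1)
    (Function.Periodic.differentiable_qParam z)

lemma K_diff {z : ℂ} (hz : 0 < z.im) : DifferentiableAt ℂ (fun z ↦ KK (𝕢 1 z)) z :=
  (KK_diff (q_lt hz)).comp z (f := 𝕢 1) (Function.Periodic.differentiable_qParam z)

lemma K1_diff {z : ℂ} (hz : 0 < z.im) : DifferentiableAt ℂ (fun z ↦ KK (𝕢 1 (z / 2))) z :=
  (K_diff (half_im hz)).comp z (f := fun z ↦ z / 2) (by fun_prop)

lemma K2_diff {z : ℂ} (hz : 0 < z.im) : DifferentiableAt ℂ (fun z ↦ KK (𝕢 1 ((z + 1) / 2))) z :=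
  (K_diff (half_im (add_im hz))).comp z (f := fun z ↦ (z + 1) / 2) (by fun_prop)

lemma mdiff_of {f : ℂ → ℂ} (hf : ∀ z : ℂ, 0 < z.im → DifferentiableAt ℂ f z) :
    MDifferentiable (modelWithCornersSelf ℂ ℂ) (modelWithCornersSelf ℂ ℂ)
      (fun τ : UpperHalfPlane ↦ f τ) := by
  rw [UpperHalfPlane.mdifferentiable_iff]
  refine DifferentiableOn.congr (f := f) (fun z hz ↦ (hf z hz).differentiableWithinAt) fun z hz ↦ ?_
  simp [UpperHalfPlane.ofComplex_apply_of_im_pos hz]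

lemma q_tendsto : Tendsto (fun τ : UpperHalfPlane ↦ 𝕢 1 τ) UpperHalfPlane.atImInfty (𝓝[≠] 0) :=
  (Function.Periodic.qParam_tendsto one_pos).comp UpperHalfPlane.tendsto_coe_atImInfty

lemma q_tendsto1 :
    Tendsto (fun τ : UpperHalfPlane ↦ 𝕢 1 ((τ : ℂ) / 2)) UpperHalfPlane.atImInfty (𝓝 0) := by
  have h := (Function.Periodic.qParam_tendsto (h := 2) two_pos).comp
    UpperHalfPlane.tendsto_coe_atImInfty
  refine (h.mono_right nhdsWithin_le_nhds).congr fun τ ↦ ?_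
  simp [Function.Periodic.qParam]
  ring_nf

lemma q_tendsto2 :
    Tendsto (fun τ : UpperHalfPlane ↦ 𝕢 1 (((τ : ℂ) + 1) / 2)) UpperHalfPlane.atImInfty (𝓝 0) := by
  have h := q_tendsto1.mul_const (𝕢 1 (1 / 2))
  rw [zero_mul] at h
  refine h.congr fun τ ↦ ?_
  simp only [Function.Periodic.qParam, ← Complex.exp_add]
  ring_nf

lemma NN_tendsto :
    Tendsto (fun τ : UpperHalfPlane ↦ NN τ) UpperHalfPlane.atImInfty (𝓝 0) := by
  obtain ⟨c, hc⟩ := HH_tendsto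
  have := (hc.comp q_tendsto).mul ((KK_tendsto.comp q_tendsto1).mul (KK_tendsto.comp q_tendsto2))
  simpa [NN] using this

open MatrixGroups SlashInvariantForm in
lemma NN_slash (A : SL(2, ℤ)) :
    (fun τ : UpperHalfPlane ↦ NN τ) ∣[(0 : ℤ)] A = fun τ : UpperHalfPlane ↦ NN τ := by
  refine slash_action_generators_SL2Z ?_ ?_ A
  · ext z
    rw [SL_slash_apply, UpperHalfPlane.modular_S_smul]
    simpa [neg_div, inv_neg] using NN_S z.2
  · ext z
    rw [SL_slash_apply, UpperHalfPlane.modular_T_smul]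
    simpa [add_comm] using NN_T z

open MatrixGroups in
/-- The level one norm of `g / v` as a modular form of weight zero. -/
noncomputable def NF : ModularForm 𝒮ℒ 0 where
  toFun := fun τ ↦ NN τ
  slash_action_eq' A hA := by
    obtain ⟨A, rfl⟩ := hA
    exact NN_slash A
  holo' := mdiff_of fun z hz ↦ (H_diff hz).mul ((K1_diff hz).mul (K2_diff hz))
  bdd_at_cusps' hc := by
    rw [Subgroup.IsArithmetic.isCusp_iff_isCusp_SL2Z] at hc
    rw [OnePoint.isBoundedAt_iff_forall_SL2Z hc]
    intro γ _
    rw [NN_slash]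
    exact UpperHalfPlane.IsZeroAtImInfty.isBoundedAtImInfty NN_tendsto

lemma NN_eq_zero : (fun τ : UpperHalfPlane ↦ NN τ) = 0 := by
  obtain ⟨c, hc⟩ := ModularFormClass.levelOne_weight_zero_const NF
  have hc' : (fun τ : UpperHalfPlane ↦ NN τ) = Function.const _ c := hc
  have h := NN_tendsto
  rw [hc'] at h
  have h0 : c = 0 := tendsto_nhds_unique tendsto_const_nhds h
  rw [hc', h0]
  rfl

lemma GG_eq_zero (z : ℂ) (hz : 0 < z.im) : GG (𝕢 1 z) = 0 := by
  have h := NN_eq_zero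
  have e : (fun τ : UpperHalfPlane ↦ NN τ) = (fun τ : UpperHalfPlane ↦ HH (𝕢 1 τ)) *
      ((fun τ : UpperHalfPlane ↦ KK (𝕢 1 ((τ : ℂ) / 2))) *
        (fun τ : UpperHalfPlane ↦ KK (𝕢 1 (((τ : ℂ) + 1) / 2)))) := rfl
  have m0 := mdiff_of (f := fun z ↦ HH (𝕢 1 z)) fun z hz ↦ H_diff hz
  have m1 := mdiff_of (f := fun z ↦ KK (𝕢 1 (z / 2))) fun z hz ↦ K1_diff hz
  have m2 := mdiff_of (f := fun z ↦ KK (𝕢 1 ((z + 1) / 2))) fun z hz ↦ K2_diff hz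
  rw [e, UpperHalfPlane.mul_eq_zero_iff m0 (m1.mul m2),
    UpperHalfPlane.mul_eq_zero_iff m1 m2] at h
  have hq : 𝕢 1 z ≠ 0 := Function.Periodic.qParam_ne_zero z
  have hu := UU_ne (q_lt hz)
  have hv := VV_ne (q_lt hz)
  rcases h with h | h | h
  · have := congrFun h ⟨z, hz⟩
    simpa [HH, hq, hv] using this
  · have := congrFun h ⟨2 * z, two_im hz⟩
    simpa [KK, hu] using this
  · have := congrFun h ⟨2 * z - 1, by simpa using hz⟩
    simpa [KK, hu] using this

end A2Proof

/-- `(2E₂(q²) − E₂(q))² F(q)⁸ F(q²)⁸ = F(q)²⁴ + 64 q F(q²)²⁴`, i.e.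
`A₂⁴ η(q)⁸η(q²)⁸ = η(q)²⁴ + 2⁶η(q²)²⁴` for the generator `A₂² = 2E₂(q²) − E₂(q)`
of weight-2 modular forms for `Γ₀(2)`. -/
theorem A2_sq_eta_identity (q : ℂ) (hq : ‖q‖ < 1) :
    (2 * E2 (q ^ 2) - E2 q) ^ 2 * eulerF q ^ 8 * eulerF (q ^ 2) ^ 8
      = eulerF q ^ 24 + 64 * q * eulerF (q ^ 2) ^ 24 := by
  rcases eq_or_ne q 0 with rfl | h0
  · simp [A2Proof.eulerF_zero, A2Proof.E2_zero]
    norm_num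
  · have him := Function.Periodic.im_invQParam_pos_of_norm_lt_one one_pos hq h0
    have h := A2Proof.GG_eq_zero _ him
    rw [Function.Periodic.qParam_right_inv one_ne_zero h0] at h
    have h1 := A2Proof.eulerF_ne_zero hq
    have h2 := A2Proof.eulerF_ne_zero (A2Proof.sq_lt hq)
    rw [A2Proof.GG, A2Proof.UU, A2Proof.VV, A2Proof.AA] at h
    field_simp at h
    linear_combination h
end
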